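/- Let P ⊂ ℝⁿ be a symmetric polytope whose facets are simplices. Then (1/|P|) ∫_P ‖x‖₂² dx ≤ (2/((n+1)(n+2))) · max ‖ε₁y₁ + … + εₙyₙ‖₂², where the maximum is over all facets conv{y₁,…,yₙ} of P and all sign choices ε₁,…,εₙ ∈ {−1,+1}. -/

import Mathlib

open MeasureTheory

/-- `F` is a facet of the polytope `P ⊂ ℝⁿ`: a proper nonempty exposed face whose
affine span has dimension `n − 1`. -/
def IsFacet {n : ℕ} (P F : Set (Fin n → ℝ)) : Prop :=
  IsExposed ℝ P F ∧ F ≠ P ∧ F.Nonempty ∧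
    Module.finrank ℝ (affineSpan ℝ F).direction = n - 1

/-!
Let `P` be a polytope with the origin in its interior. Up to null sets `P` is the disjoint union of
the pyramids with apex `0` over its facets, so it is enough to bound the second moment of each
pyramid. The pyramid over `conv {y₁, …, yₙ}` is a linear image of the corner simplex
`{u ≥ 0, ∑ uᵢ ≤ 1}`, where the mean of `‖∑ uᵢ yᵢ‖²` is
`(‖∑ yᵢ‖² + ∑ ‖yᵢ‖²) / ((n + 1) (n + 2))`. The first term is one of the signed sums, and choosing
the signs greedily, so that all inner products between a new term and the partial sum are
nonnegative, gives a signed sum whose squared norm dominates `∑ ‖yᵢ‖²`.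

The moments of the corner simplex come from integrating `uᵃ e^{-∑ uᵢ}` over the positive orthant in
two ways: as a product of Gamma integrals, and, writing `e^{-S} = ∫_{s ≥ S} e^{-s} ds`, as an
integral over the dilates of the simplex.

That the facets cover the boundary follows by polarity: the functionals `l ≤ 1` on `P` with
`l p = 1` form a face of the polar body, which has an extreme point, and the vertices of `P` on
which an extreme functional equals `1` span the whole space.
-/

section ExponentialIntegrals

lemma lintegral_Ici_exp_neg (c : ℝ) :
    ∫⁻ s in Set.Ici c, ENNReal.ofReal (Real.exp (-s)) = ENNReal.ofReal (Real.exp (-c)) := by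
  rw [setLIntegral_congr Ioi_ae_eq_Ici.symm, ← ofReal_integral_eq_lintegral_ofReal
    (integrableOn_exp_neg_Ioi c) (ae_of_all _ fun s => (Real.exp_pos _).le), integral_exp_neg_Ioi]

lemma pow_mul_exp_neg_eq_exp_neg_mul_rpow (k : ℕ) (t : ℝ) :
    t ^ k * Real.exp (-t) = Real.exp (-t) * t ^ ((k + 1 : ℝ) - 1) := by
  rw [add_sub_cancel_right, Real.rpow_natCast, mul_comm]

lemma integrableOn_pow_mul_exp_neg (k : ℕ) :
    IntegrableOn (fun t : ℝ => t ^ k * Real.exp (-t)) (Set.Ici 0) := by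
  simp only [pow_mul_exp_neg_eq_exp_neg_mul_rpow]
  rw [integrableOn_Ici_iff_integrableOn_Ioi]
  exact Real.GammaIntegral_convergent k.cast_add_one_pos

lemma integral_pow_mul_exp_neg (k : ℕ) :
    ∫ t in Set.Ici (0 : ℝ), t ^ k * Real.exp (-t) = k.factorial := by
  simp only [integral_Ici_eq_integral_Ioi, pow_mul_exp_neg_eq_exp_neg_mul_rpow]
  rw [← Real.Gamma_eq_integral k.cast_add_one_pos, Real.Gamma_nat_eq_factorial]

lemma lintegral_pow_mul_exp_neg (k : ℕ) :
    ∫⁻ t in Set.Ici (0 : ℝ), ENNReal.ofReal (t ^ k * Real.exp (-t)) = k.factorial := by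
  rw [← ofReal_integral_eq_lintegral_ofReal (integrableOn_pow_mul_exp_neg k),
    integral_pow_mul_exp_neg, ENNReal.ofReal_natCast]
  filter_upwards [ae_restrict_mem measurableSet_Ici] with t (ht : 0 ≤ t)
  positivity

lemma lintegral_exp_neg_eq_lintegral_meas_le {X : Type*} [MeasurableSpace X] (ν : Measure X)
    [SFinite ν] {S : X → ℝ} (hS : Measurable S) :
    ∫⁻ x, ENNReal.ofReal (Real.exp (-S x)) ∂ν =
      ∫⁻ s, ENNReal.ofReal (Real.exp (-s)) * ν {x | S x ≤ s} := by
  have hmeas : MeasurableSet {p : X × ℝ | S p.1 ≤ p.2} :=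
    measurableSet_le (by fun_prop) measurable_snd
  calc ∫⁻ x, ENNReal.ofReal (Real.exp (-S x)) ∂ν
      = ∫⁻ x, ∫⁻ s : ℝ, {p : X × ℝ | S p.1 ≤ p.2}.indicator
          (fun p => ENNReal.ofReal (Real.exp (-p.2))) (x, s) ∂volume ∂ν := by
        refine lintegral_congr fun x => ?_
        rw [← lintegral_Ici_exp_neg, ← lintegral_indicator measurableSet_Ici]
        rfl
    _ = ∫⁻ s : ℝ, ∫⁻ x, {p : X × ℝ | S p.1 ≤ p.2}.indicator
          (fun p => ENNReal.ofReal (Real.exp (-p.2))) (x, s) ∂ν := by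
        refine lintegral_lintegral_swap (Measurable.aemeasurable ?_)
        exact Measurable.indicator (by fun_prop) hmeas
    _ = ∫⁻ s, ENNReal.ofReal (Real.exp (-s)) * ν {x | S x ≤ s} := by
        refine lintegral_congr fun s => ?_
        rw [← lintegral_indicator_const (measurableSet_le hS measurable_const)]
        rfl

theorem lintegral_exp_neg_eq_factorial_mul {X : Type*} [MeasurableSpace X] {ν : Measure X}
    [SFinite ν] {S : X → ℝ} (hS : Measurable S) (hS_nonneg : ∀ᵐ x ∂ν, 0 ≤ S x) {k : ℕ}
    (hscale : ∀ s, 0 < s → ν {x | S x ≤ s} = ENNReal.ofReal (s ^ k) * ν {x | S x ≤ 1}) :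
    ∫⁻ x, ENNReal.ofReal (Real.exp (-S x)) ∂ν = k.factorial * ν {x | S x ≤ 1} := by
  have hneg (s : ℝ) (hs : s < 0) : ν {x | S x ≤ s} = 0 :=
    measure_mono_null (fun x (hx : S x ≤ s) => (hx.trans_lt hs).not_ge) (ae_iff.1 hS_nonneg)
  calc ∫⁻ x, ENNReal.ofReal (Real.exp (-S x)) ∂ν
      = ∫⁻ s, ENNReal.ofReal (Real.exp (-s)) * ν {x | S x ≤ s} :=
        lintegral_exp_neg_eq_lintegral_meas_le ν hS
    _ = ∫⁻ s in Set.Ici 0, ENNReal.ofReal (Real.exp (-s)) * ν {x | S x ≤ s} := by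
        refine (setLIntegral_eq_of_support_subset fun s hs => ?_).symm
        by_contra h
        exact hs (by simp only [hneg s (not_le.1 h), mul_zero])
    _ = ∫⁻ s in Set.Ici 0, ENNReal.ofReal (s ^ k * Real.exp (-s)) * ν {x | S x ≤ 1} := by
        rw [setLIntegral_congr Ioi_ae_eq_Ici.symm, setLIntegral_congr Ioi_ae_eq_Ici.symm]
        refine setLIntegral_congr_fun measurableSet_Ioi fun s (hs : 0 < s) => ?_
        simp only [hscale s hs, ENNReal.ofReal_mul (pow_nonneg hs.le k)]
        ring
    _ = k.factorial * ν {x | S x ≤ 1} := by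
        rw [lintegral_mul_const _ (by fun_prop), lintegral_pow_mul_exp_neg]

end ExponentialIntegrals

open scoped Pointwise in
lemma smul_Ici_zero {V : Type*} [AddCommGroup V] [PartialOrder V] [Module ℝ V] [PosSMulMono ℝ V]
    [PosSMulReflectLE ℝ V] {s : ℝ} (hs : 0 < s) : s • (Set.Ici 0 : Set V) = Set.Ici 0 :=
  ((OrderIso.smulRight hs).image_Ici (0 : V)).trans (congrArg Set.Ici (smul_zero s))

open scoped Pointwise in
lemma setLIntegral_smul_set {V : Type*} [NormedAddCommGroup V] [NormedSpace ℝ V]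
    [FiniteDimensional ℝ V] [MeasurableSpace V] [BorelSpace V] (μ : Measure V) [μ.IsAddHaarMeasure]
    {A : Set V} (hA : MeasurableSet A) (f : V → ENNReal) {s : ℝ} (hs : 0 < s) :
    ∫⁻ x in s • A, f x ∂μ =
      ENNReal.ofReal (s ^ Module.finrank ℝ V) * ∫⁻ x in A, f (s • x) ∂μ := by
  have hderiv (x : V) : HasFDerivAt (s • ·) (s • ContinuousLinearMap.id ℝ V) x :=
    (hasFDerivAt_id x).const_smul s
  have hdet : |(s • ContinuousLinearMap.id ℝ V).det| = s ^ Module.finrank ℝ V := by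
    rw [ContinuousLinearMap.det, ContinuousLinearMap.toLinearMap_smul, ContinuousLinearMap.coe_id,
      LinearMap.det_smul, LinearMap.det_id, mul_one, abs_of_pos (by positivity)]
  rw [← Set.image_smul, lintegral_image_eq_lintegral_abs_det_fderiv_mul μ hA
    (fun x _ => (hderiv x).hasFDerivWithinAt) (smul_right_injective V hs.ne').injOn, hdet,
    lintegral_const_mul' _ _ ENNReal.ofReal_ne_top]

lemma setIntegral_image_linearMap {V E : Type*} [NormedAddCommGroup V] [NormedSpace ℝ V]
    [FiniteDimensional ℝ V] [MeasurableSpace V] [BorelSpace V] (μ : Measure V)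
    [μ.IsAddHaarMeasure] [NormedAddCommGroup E] [NormedSpace ℝ E] (L : V →ₗ[ℝ] V) {s : Set V}
    (hs : MeasurableSet s) (g : V → E) :
    ∫ x in L '' s, g x ∂μ = |L.det| • ∫ x in s, g (L x) ∂μ := by
  by_cases hdet : L.det = 0
  · have hnull : μ (L '' s) = 0 := by
      rw [Measure.addHaar_image_linearMap, hdet, abs_zero, ENNReal.ofReal_zero, zero_mul]
    rw [setIntegral_measure_zero _ hnull, hdet, abs_zero, zero_smul]
  · rw [← integral_smul]
    exact integral_image_eq_integral_abs_det_fderiv_smul μ hs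
      (fun x _ => L.toContinuousLinearMap.hasFDerivAt.hasFDerivWithinAt)
      (L.equivOfDetNeZero hdet).injective.injOn g

section CornerSimplex

variable {ι : Type*} [Fintype ι]

variable (ι) in
/-- The solid simplex with vertices the origin and the standard basis vectors. -/
def cornerSimplex : Set (ι → ℝ) :=
  Set.Ici 0 ∩ {u | ∑ i, u i ≤ 1}

lemma isCompact_cornerSimplex : IsCompact (cornerSimplex ι) := by
  refine (isCompact_Icc (a := (0 : ι → ℝ)) (b := 1)).of_isClosed_subset ?_ ?_
  · exact isClosed_Ici.inter (isClosed_le (by fun_prop) continuous_const)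
  · rintro u ⟨h0, h1⟩
    exact ⟨h0, fun i => (Finset.single_le_sum (fun j _ => h0 j) (Finset.mem_univ i)).trans h1⟩

lemma measurableSet_cornerSimplex : MeasurableSet (cornerSimplex ι) :=
  isCompact_cornerSimplex.measurableSet

lemma integrableOn_cornerSimplex {f : (ι → ℝ) → ℝ} (hf : Continuous f) :
    IntegrableOn f (cornerSimplex ι) :=
  hf.continuousOn.integrableOn_compact isCompact_cornerSimplex

/-- The measure on the positive orthant with density the monomial `∏ uᵢ ^ aᵢ`, by which the
monomial moments of `cornerSimplex` become volumes. -/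
noncomputable def monomialMeasure (a : ι → ℕ) : Measure (ι → ℝ) :=
  (volume.restrict (Set.Ici 0)).withDensity fun u => ENNReal.ofReal (∏ i, u i ^ a i)

instance (a : ι → ℕ) : SFinite (monomialMeasure a) := by
  unfold monomialMeasure; infer_instance

lemma lintegral_monomialMeasure (a : ι → ℕ) {f : (ι → ℝ) → ENNReal} (hf : Measurable f) :
    ∫⁻ u, f u ∂monomialMeasure a =
      ∫⁻ u in Set.Ici 0, ENNReal.ofReal (∏ i, u i ^ a i) * f u :=
  lintegral_withDensity_eq_lintegral_mul _ (by fun_prop) hf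

lemma ae_monomialMeasure_nonneg (a : ι → ℕ) : ∀ᵐ u ∂monomialMeasure a, 0 ≤ u :=
  (withDensity_absolutelyContinuous _ _).ae_le (ae_restrict_mem measurableSet_Ici)

lemma restrict_Ici_zero_eq_pi :
    (volume : Measure (ι → ℝ)).restrict (Set.Ici 0) =
      Measure.pi fun _ => volume.restrict (Set.Ici 0) := by
  rw [← Measure.restrict_pi_pi, ← Set.pi_univ_Ici]
  rfl

lemma lintegral_exp_neg_sum_monomialMeasure (a : ι → ℕ) :
    ∫⁻ u, ENNReal.ofReal (Real.exp (-∑ i, u i)) ∂monomialMeasure a =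
      ENNReal.ofReal (∏ i, ((a i).factorial : ℝ)) := by
  have hint : Integrable (fun u : ι → ℝ => ∏ i, u i ^ a i * Real.exp (-u i))
      (volume.restrict (Set.Ici 0)) := by
    rw [restrict_Ici_zero_eq_pi]
    exact Integrable.fintype_prod fun i => integrableOn_pow_mul_exp_neg (a i)
  have hnonneg {u : ι → ℝ} (hu : 0 ≤ u) (i : ι) : 0 ≤ u i ^ a i := pow_nonneg (hu i) _
  calc ∫⁻ u, ENNReal.ofReal (Real.exp (-∑ i, u i)) ∂monomialMeasure a
      = ∫⁻ u in Set.Ici (0 : ι → ℝ), ENNReal.ofReal (∏ i, u i ^ a i * Real.exp (-u i)) := by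
        rw [lintegral_monomialMeasure a (by fun_prop)]
        refine setLIntegral_congr_fun measurableSet_Ici fun u (hu : 0 ≤ u) => ?_
        simp only [← ENNReal.ofReal_mul (Finset.prod_nonneg fun i _ => hnonneg hu i),
          ← Finset.sum_neg_distrib, Real.exp_sum, ← Finset.prod_mul_distrib]
    _ = ENNReal.ofReal (∫ u in Set.Ici (0 : ι → ℝ), ∏ i, u i ^ a i * Real.exp (-u i)) := by
        refine (ofReal_integral_eq_lintegral_ofReal hint ?_).symm
        filter_upwards [ae_restrict_mem measurableSet_Ici] with u hu
        exact Finset.prod_nonneg fun i _ => mul_nonneg (hnonneg hu i) (Real.exp_pos _).le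
    _ = ENNReal.ofReal (∏ i, ((a i).factorial : ℝ)) := by
        rw [restrict_Ici_zero_eq_pi,
          integral_fintype_prod_eq_prod fun i (t : ℝ) => t ^ a i * Real.exp (-t)]
        simp only [integral_pow_mul_exp_neg]

lemma monomialMeasure_apply (a : ι → ℕ) {A : Set (ι → ℝ)} (hA : MeasurableSet A) :
    monomialMeasure a A = ∫⁻ u in Set.Ici 0 ∩ A, ENNReal.ofReal (∏ i, u i ^ a i) := by
  rw [monomialMeasure, withDensity_apply _ hA, Measure.restrict_restrict hA, Set.inter_comm]

open scoped Pointwise in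
lemma monomialMeasure_smul (a : ι → ℕ) {A : Set (ι → ℝ)} (hA : MeasurableSet A) {s : ℝ}
    (hs : 0 < s) :
    monomialMeasure a (s • A) =
      ENNReal.ofReal (s ^ (Fintype.card ι + ∑ i, a i)) * monomialMeasure a A := by
  have hmonomial (u : ι → ℝ) : ∏ i, (s • u) i ^ a i = s ^ (∑ i, a i) * ∏ i, u i ^ a i := by
    simp only [Pi.smul_apply, smul_eq_mul, mul_pow, Finset.prod_mul_distrib,
      Finset.prod_pow_eq_pow_sum]
  have hs_pow : 0 ≤ s ^ ∑ i, a i := by positivity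
  rw [monomialMeasure_apply a (hA.const_smul₀ s), monomialMeasure_apply a hA,
    ← smul_Ici_zero hs, ← Set.smul_set_inter₀ hs.ne', smul_Ici_zero hs,
    setLIntegral_smul_set volume (measurableSet_Ici.inter hA) _ hs,
    Module.finrank_fintype_fun_eq_card]
  simp only [hmonomial, ENNReal.ofReal_mul hs_pow]
  rw [lintegral_const_mul' _ _ ENNReal.ofReal_ne_top, ← mul_assoc,
    ← ENNReal.ofReal_mul (by positivity), ← pow_add]

theorem integral_cornerSimplex_prod_pow (a : ι → ℕ) :
    ∫ u in cornerSimplex ι, ∏ i, u i ^ a i =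
      (∏ i, ((a i).factorial : ℝ)) / (Fintype.card ι + ∑ i, a i).factorial := by
  have hmeas (s : ℝ) : MeasurableSet {u : ι → ℝ | ∑ i, u i ≤ s} :=
    measurableSet_le (by fun_prop) measurable_const
  have hscale (s : ℝ) (hs : 0 < s) : monomialMeasure a {u | ∑ i, u i ≤ s} =
      ENNReal.ofReal (s ^ (Fintype.card ι + ∑ i, a i)) * monomialMeasure a {u | ∑ i, u i ≤ 1} := by
    rw [← monomialMeasure_smul a (hmeas 1) hs]
    congr 1
    ext u
    simp only [Set.mem_smul_set_iff_inv_smul_mem₀ hs.ne', Set.mem_ofPred_eq, Pi.smul_apply,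
      smul_eq_mul, ← Finset.mul_sum, inv_mul_le_iff₀ hs, mul_one]
  have hmass : monomialMeasure a {u | ∑ i, u i ≤ 1} =
      ENNReal.ofReal (∫ u in cornerSimplex ι, ∏ i, u i ^ a i) := by
    rw [monomialMeasure_apply a (hmeas 1)]
    refine (ofReal_integral_eq_lintegral_ofReal (integrableOn_cornerSimplex (by fun_prop)) ?_).symm
    filter_upwards [ae_restrict_mem measurableSet_cornerSimplex] with u hu
    exact Finset.prod_nonneg fun i _ => pow_nonneg (hu.1 i) _
  have hnonneg : 0 ≤ ∫ u in cornerSimplex ι, ∏ i, u i ^ a i :=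
    setIntegral_nonneg measurableSet_cornerSimplex fun u hu =>
      Finset.prod_nonneg fun i _ => pow_nonneg (hu.1 i) _
  have hexp := lintegral_exp_neg_eq_factorial_mul (ν := monomialMeasure a)
    (S := fun u => ∑ i, u i) (by fun_prop)
    ((ae_monomialMeasure_nonneg a).mono fun u hu => Finset.sum_nonneg fun i _ => hu i) hscale
  rw [lintegral_exp_neg_sum_monomialMeasure, hmass, ← ENNReal.ofReal_natCast,
    ← ENNReal.ofReal_mul (by positivity),
    ENNReal.ofReal_eq_ofReal_iff (by positivity) (by positivity)] at hexp
  rw [hexp, mul_div_cancel_left₀ _ (by positivity)]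

lemma volume_real_cornerSimplex :
    volume.real (cornerSimplex ι) = ((Fintype.card ι).factorial : ℝ)⁻¹ := by
  have hmoment := integral_cornerSimplex_prod_pow (0 : ι → ℕ)
  simpa only [Pi.zero_apply, pow_zero, Finset.prod_const_one, setIntegral_const, smul_eq_mul,
    mul_one, Nat.factorial_zero, Nat.cast_one, Finset.sum_const_zero, add_zero, one_div]
    using hmoment

lemma integral_cornerSimplex_mul [DecidableEq ι] (i j : ι) :
    ∫ u in cornerSimplex ι, u i * u j =
      (if i = j then 2 else 1) / (Fintype.card ι + 2).factorial := by
  have hmonomial (u : ι → ℝ) :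
      ∏ k, u k ^ (Pi.single i 1 + Pi.single j 1 : ι → ℕ) k = u i * u j := by
    simp only [Pi.add_apply, pow_add, Finset.prod_mul_distrib, Pi.single_apply, pow_ite, pow_one,
      pow_zero, Finset.prod_ite_eq', Finset.mem_univ, if_true]
  have hdegree : ∑ k, (Pi.single i 1 + Pi.single j 1 : ι → ℕ) k = 2 := by
    simp only [Pi.add_apply, Finset.sum_add_distrib, Finset.sum_pi_single', Finset.mem_univ,
      if_true, Nat.reduceAdd]
  have hfactorial : ∏ k, (((Pi.single i 1 + Pi.single j 1 : ι → ℕ) k).factorial : ℝ) =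
      if i = j then 2 else 1 := by
    have hfactor (k : ι) : (((Pi.single i 1 + Pi.single j 1 : ι → ℕ) k).factorial : ℝ) =
        if k = i then if i = j then 2 else 1 else 1 := by
      simp only [Pi.add_apply, Pi.single_apply]
      split_ifs <;> simp_all
    simp only [hfactor, Finset.prod_ite_eq', Finset.mem_univ, if_true]
  simp only [← hmonomial, integral_cornerSimplex_prod_pow, hfactorial, hdegree]

theorem integral_cornerSimplex_norm_sq {E : Type*} [NormedAddCommGroup E]
    [InnerProductSpace ℝ E] (y : ι → E) :
    ∫ u in cornerSimplex ι, ‖∑ i, u i • y i‖ ^ 2 =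
      (‖∑ i, y i‖ ^ 2 + ∑ i, ‖y i‖ ^ 2) / (Fintype.card ι + 2).factorial := by
  classical
  have hexpand (u : ι → ℝ) :
      ‖∑ i, u i • y i‖ ^ 2 = ∑ i, ∑ j, u i * u j * inner ℝ (y i) (y j) := by
    rw [← real_inner_self_eq_norm_sq, sum_inner]
    simp only [inner_sum, real_inner_smul_left, real_inner_smul_right, mul_assoc, mul_left_comm]
  have hsum : ‖∑ i, y i‖ ^ 2 = ∑ i, ∑ j, inner ℝ (y i) (y j) := by
    simpa only [Pi.one_apply, one_smul, one_mul] using hexpand 1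
  calc ∫ u in cornerSimplex ι, ‖∑ i, u i • y i‖ ^ 2
      = ∑ i, ∑ j, (∫ u in cornerSimplex ι, u i * u j) * inner ℝ (y i) (y j) := by
        simp only [hexpand]
        rw [integral_finsetSum _ fun i _ => integrableOn_cornerSimplex (by fun_prop)]
        refine Finset.sum_congr rfl fun i _ => ?_
        rw [integral_finsetSum _ fun j _ => integrableOn_cornerSimplex (by fun_prop)]
        exact Finset.sum_congr rfl fun j _ => integral_mul_const _ _
    _ = ∑ i, ∑ j, (1 + if i = j then 1 else 0) * inner ℝ (y i) (y j) /
          (Fintype.card ι + 2).factorial := by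
        refine Finset.sum_congr rfl fun i _ => Finset.sum_congr rfl fun j _ => ?_
        rw [integral_cornerSimplex_mul]
        split_ifs <;> ring
    _ = (‖∑ i, y i‖ ^ 2 + ∑ i, ‖y i‖ ^ 2) / (Fintype.card ι + 2).factorial := by
        simp only [← Finset.sum_div, add_mul, one_mul, Finset.sum_add_distrib, ite_mul, zero_mul,
          Finset.sum_ite_eq, Finset.mem_univ, if_true, ← hsum, real_inner_self_eq_norm_sq]

end CornerSimplex

lemma exists_sign_sum_norm_sq_le {ι E : Type*} [NormedAddCommGroup E] [InnerProductSpace ℝ E]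
    (s : Finset ι) (y : ι → E) :
    ∃ ε : ι → Bool,
      ∑ i ∈ s, ‖y i‖ ^ 2 ≤ ‖∑ i ∈ s, (if ε i then (1 : ℝ) else -1) • y i‖ ^ 2 := by
  classical
  induction s using Finset.induction with
  | empty => exact ⟨fun _ => true, by simp⟩
  | insert k s hk ih =>
    obtain ⟨ε, hε⟩ := ih
    set z := ∑ i ∈ s, (if ε i then (1 : ℝ) else -1) • y i
    obtain ⟨b, hb⟩ : ∃ b : Bool, 0 ≤ inner ℝ ((if b then (1 : ℝ) else -1) • y k) z := by
      rcases le_total 0 (inner ℝ (y k) z) with h | h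
      · exact ⟨true, by simpa⟩
      · exact ⟨false, by simpa⟩
    refine ⟨Function.update ε k b, ?_⟩
    have hz : ∑ i ∈ s, (if Function.update ε k b i then (1 : ℝ) else -1) • y i = z :=
      Finset.sum_congr rfl fun i hi => by rw [Function.update_of_ne (ne_of_mem_of_not_mem hi hk)]
    have hnorm : ‖(if b then (1 : ℝ) else -1) • y k‖ = ‖y k‖ := by cases b <;> simp
    rw [Finset.sum_insert hk, Finset.sum_insert hk, Function.update_self, hz,
      norm_add_sq_real, hnorm]
    linarith

section Pyramid

open scoped Pointwise

variable {V : Type*} [AddCommGroup V] [Module ℝ V]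

/-- The union of the segments from the origin to the points of `F`. For a facet `F` of a polytope
this is the pyramid with base `F` and apex `0`. -/
def pyramid (F : Set V) : Set V :=
  Set.Icc (0 : ℝ) 1 • F

lemma isCompact_pyramid [TopologicalSpace V] [ContinuousSMul ℝ V] {F : Set V} (hF : IsCompact F) :
    IsCompact (pyramid F) :=
  isCompact_Icc.smul_set hF

lemma pyramid_image {W : Type*} [AddCommGroup W] [Module ℝ W] (L : V →ₗ[ℝ] W) (F : Set V) :
    pyramid (L '' F) = L '' pyramid F :=
  (Set.image_image2_distrib_right (map_smul L)).symm

variable {ι : Type*} [Fintype ι]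

lemma pyramid_stdSimplex [Nonempty ι] : pyramid (stdSimplex ℝ ι) = cornerSimplex ι := by
  ext u
  constructor
  · rintro ⟨t, ⟨ht0, ht1⟩, w, ⟨hw0, hw1⟩, rfl⟩
    refine ⟨fun i => mul_nonneg ht0 (hw0 i), ?_⟩
    simpa only [Set.mem_ofPred_eq, Pi.smul_apply, smul_eq_mul, ← Finset.mul_sum, hw1, mul_one]
  · rintro ⟨hu0 : 0 ≤ u, hu1 : ∑ i, u i ≤ 1⟩
    have hsum : 0 ≤ ∑ i, u i := Finset.sum_nonneg fun i _ => hu0 i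
    rcases hsum.eq_or_lt with hzero | hpos
    · have hu : u = 0 := funext fun i =>
        (Finset.sum_eq_zero_iff_of_nonneg fun i _ => hu0 i).1 hzero.symm i (Finset.mem_univ i)
      obtain ⟨w⟩ : Nonempty (stdSimplex ℝ ι) := inferInstance
      exact ⟨0, by simp, w, w.2, by simp [hu]⟩
    · refine ⟨∑ i, u i, ⟨hsum, hu1⟩, (∑ i, u i)⁻¹ • u, ⟨fun i => ?_, ?_⟩, smul_inv_smul₀ hpos.ne' u⟩
      · exact mul_nonneg (inv_nonneg.2 hsum) (hu0 i)
      · simp only [Pi.smul_apply, smul_eq_mul, ← Finset.mul_sum, inv_mul_cancel₀ hpos.ne']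

lemma image_linearCombination_stdSimplex (y : ι → V) :
    Fintype.linearCombination ℝ y '' stdSimplex ℝ ι = convexHull ℝ (Set.range y) := by
  classical
  rw [← convexHull_rangle_single_eq_stdSimplex, LinearMap.image_convexHull, ← Set.range_comp]
  congr 2
  ext i
  simp

lemma pyramid_convexHull_range [Nonempty ι] (y : ι → V) :
    pyramid (convexHull ℝ (Set.range y)) = Fintype.linearCombination ℝ y '' cornerSimplex ι := by
  rw [← image_linearCombination_stdSimplex, pyramid_image, pyramid_stdSimplex]

lemma setIntegral_pyramid_norm_sq [Nonempty ι] {E : Type*} [NormedAddCommGroup E]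
    [InnerProductSpace ℝ E] (T : (ι → ℝ) →ₗ[ℝ] E) (y : ι → ι → ℝ) :
    ∫ x in pyramid (convexHull ℝ (Set.range y)), ‖T x‖ ^ 2 =
      (‖∑ i, T (y i)‖ ^ 2 + ∑ i, ‖T (y i)‖ ^ 2) / ((Fintype.card ι + 1) * (Fintype.card ι + 2)) *
        volume.real (pyramid (convexHull ℝ (Set.range y))) := by
  set L := Fintype.linearCombination ℝ y with hL
  have hT (u : ι → ℝ) : T (L u) = ∑ i, u i • T (y i) := by
    simp only [hL, Fintype.linearCombination_apply, map_sum, map_smul]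
  have hfactorial : ((Fintype.card ι + 2).factorial : ℝ) =
      (Fintype.card ι + 1) * (Fintype.card ι + 2) * (Fintype.card ι).factorial := by
    rw [Nat.factorial_succ, Nat.factorial_succ]
    push_cast
    ring
  have hvolume : volume.real (L '' cornerSimplex ι) =
      |L.det| * ((Fintype.card ι).factorial : ℝ)⁻¹ := by
    rw [measureReal_def, Measure.addHaar_image_linearMap, ENNReal.toReal_mul,
      ENNReal.toReal_ofReal (abs_nonneg _), ← measureReal_def, volume_real_cornerSimplex]
  rw [pyramid_convexHull_range y, setIntegral_image_linearMap _ _ measurableSet_cornerSimplex, ← hL,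
    hvolume]
  simp only [hT, integral_cornerSimplex_norm_sq, hfactorial, smul_eq_mul]
  field_simp

lemma setIntegral_pyramid_norm_sq_le [Nonempty ι] {E : Type*} [NormedAddCommGroup E]
    [InnerProductSpace ℝ E] (T : (ι → ℝ) →ₗ[ℝ] E) (y : ι → ι → ℝ) {M : ℝ}
    (hM : ∀ ε : ι → Bool, ‖∑ i, (if ε i then (1 : ℝ) else -1) • T (y i)‖ ^ 2 ≤ M) :
    ∫ x in pyramid (convexHull ℝ (Set.range y)), ‖T x‖ ^ 2 ≤
      2 / ((Fintype.card ι + 1) * (Fintype.card ι + 2)) * M *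
        volume.real (pyramid (convexHull ℝ (Set.range y))) := by
  obtain ⟨ε, hε⟩ := exists_sign_sum_norm_sq_le Finset.univ fun i => T (y i)
  have hsum : ‖∑ i, T (y i)‖ ^ 2 ≤ M := by simpa only [if_true, one_smul] using hM fun _ => true
  have hsq : ∑ i, ‖T (y i)‖ ^ 2 ≤ M := hε.trans (hM ε)
  rw [setIntegral_pyramid_norm_sq, div_mul_eq_mul_div 2]
  gcongr
  linarith

end Pyramid


section PolarBody

variable {V : Type*} [NormedAddCommGroup V] [NormedSpace ℝ V]

/-- The one-sided polar `{l | ∀ x ∈ s, l x ≤ 1}`. Unlike `StrongDual.polar` it involves no absolute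
value, so for sets that are not symmetric it still records the supporting hyperplanes. -/
def polarBody (s : Set V) : Set (StrongDual ℝ V) :=
  {l | ∀ x ∈ s, l x ≤ 1}

/-- The face of `K` cut out by the hyperplane `l = 1`, which supports `K` when `l ∈ polarBody K`. -/
def supportFace (K : Set V) (l : StrongDual ℝ V) : Set V :=
  {x ∈ K | l x = 1}

lemma polarBody_convexHull (s : Set V) : polarBody (convexHull ℝ s) = polarBody s := by
  refine Set.Subset.antisymm (fun l hl x hx => hl x (subset_convexHull ℝ s hx)) fun l hl x hx => ?_
  exact convexHull_min hl (convex_halfSpace_le l.isLinear 1) hx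

lemma isClosed_polarBody (s : Set V) : IsClosed (polarBody s) := by
  have hinter : polarBody s = ⋂ x ∈ s, {l | l x ≤ 1} := by
    ext l
    simp only [polarBody, Set.mem_ofPred_eq, Set.mem_iInter]
  rw [hinter]
  exact isClosed_biInter fun x _ => isClosed_le (by fun_prop) continuous_const

open scoped Pointwise in
lemma isCompact_polarBody [FiniteDimensional ℝ V] {s : Set V} (hs : s ∈ nhds 0) :
    IsCompact (polarBody s) := by
  have hsymm : s ∩ -s ∈ nhds 0 :=
    Filter.inter_mem hs (continuous_neg.continuousAt.preimage_mem_nhds (by rwa [neg_zero]))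
  refine Metric.isCompact_of_isClosed_isBounded (isClosed_polarBody s)
    ((NormedSpace.isBounded_polar_of_mem_nhds_zero ℝ hsymm).subset fun l hl => ?_)
  rw [StrongDual.mem_polar_iff]
  rintro x ⟨hx, hx_neg⟩
  have hneg := hl (-x) hx_neg
  rw [map_neg] at hneg
  exact abs_le.2 ⟨by linarith, hl x hx⟩

lemma isExposed_setOf_eq_of_forall_le {A : Set V} {c : ℝ} (f : StrongDual ℝ V)
    (hf : ∀ x ∈ A, f x ≤ c) : IsExposed ℝ A {x ∈ A | f x = c} := by
  rintro ⟨p, hpA, rfl⟩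
  refine ⟨f, Set.ext fun x => and_congr_right fun hx => ?_⟩
  exact ⟨fun h y hy => h ▸ hf y hy, fun h => (hf x hx).antisymm (h p hpA)⟩

lemma isExposed_supportFace {K : Set V} {l : StrongDual ℝ V} (hl : l ∈ polarBody K) :
    IsExposed ℝ K (supportFace K l) :=
  isExposed_setOf_eq_of_forall_le l hl

lemma eq_zero_of_forall_le_zero {K : Set V} (hK : K ∈ nhds 0) {f : StrongDual ℝ V}
    (hf : ∀ x ∈ K, f x ≤ 0) : f = 0 := by
  have hmax : IsLocalMax f 0 := by
    filter_upwards [hK] with x hx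
    simpa only [map_zero] using hf x hx
  exact hmax.hasFDerivAt_eq_zero f.hasFDerivAt

lemma exists_eq_supportFace_of_isExposed {K F : Set V} (h0 : 0 ∈ interior K)
    (hF : IsExposed ℝ K F) (hne : F.Nonempty) (hproper : F ≠ K) :
    ∃ l ∈ polarBody K, F = supportFace K l := by
  obtain ⟨f, hf⟩ := hF hne
  obtain ⟨p, hp⟩ := hne
  have hpK : p ∈ K := hF.subset hp
  have hmax : ∀ x ∈ K, f x ≤ f p := by rw [hf] at hp; exact hp.2
  have hF_eq : F = {x ∈ K | f x = f p} := by
    rw [hf]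
    refine Set.ext fun x => and_congr_right fun hx => ?_
    exact ⟨fun h => (hmax x hx).antisymm (h p hpK), fun h y hy => h ▸ hmax y hy⟩
  have hpos : 0 < f p := by
    have h0_le : f 0 ≤ f p := hmax 0 (interior_subset h0)
    rw [map_zero] at h0_le
    refine h0_le.lt_of_ne fun hzero => hproper ?_
    have hf_zero : f = 0 := eq_zero_of_forall_le_zero (mem_interior_iff_mem_nhds.1 h0) fun x hx =>
      (hmax x hx).trans hzero.ge
    rw [hF_eq, hf_zero]
    exact Set.sep_eq_self_iff_mem_true.2 fun x _ => rfl
  refine ⟨(f p)⁻¹ • f, fun x hx => ?_, ?_⟩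
  · exact (inv_mul_le_one₀ hpos).2 (hmax x hx)
  · rw [hF_eq]
    refine Set.ext fun x => and_congr_right fun _ => ?_
    exact eq_comm.trans (inv_mul_eq_one₀ hpos.ne').symm

lemma exists_mem_polarBody_apply_eq_one {K : Set V} (hK : Convex ℝ K) (h0 : 0 ∈ interior K) {p : V}
    (hp : p ∉ interior K) : ∃ l ∈ polarBody K, l p = 1 := by
  obtain ⟨f, hf⟩ := geometric_hahn_banach_open_point hK.interior isOpen_interior hp
  have hpos : 0 < f p := by simpa only [map_zero] using hf 0 h0
  have hle : ∀ x ∈ K, f x ≤ f p := fun x hx =>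
    closure_minimal (fun y hy => (hf y hy).le) (isClosed_le f.continuous continuous_const)
      (hK.closure_interior_eq_closure_of_nonempty_interior ⟨0, h0⟩ ▸ subset_closure hx)
  exact ⟨(f p)⁻¹ • f, fun x hx => (inv_mul_le_one₀ hpos).2 (hle x hx), inv_mul_cancel₀ hpos.ne'⟩

lemma exists_mem_extremePoints_polarBody_apply_eq_one [FiniteDimensional ℝ V] {K : Set V}
    (hK : Convex ℝ K) (h0 : 0 ∈ interior K) {p : V} (hpK : p ∈ K) (hp : p ∉ interior K) :
    ∃ l ∈ (polarBody K).extremePoints ℝ, l p = 1 := by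
  have hexposed : IsExposed ℝ (polarBody K) {l ∈ polarBody K | l p = 1} :=
    isExposed_setOf_eq_of_forall_le (ContinuousLinearMap.apply ℝ ℝ p) fun l hl => hl p hpK
  have hcompact := hexposed.isCompact (isCompact_polarBody (mem_interior_iff_mem_nhds.1 h0))
  obtain ⟨l, hl⟩ := hcompact.extremePoints_nonempty (exists_mem_polarBody_apply_eq_one hK h0 hp)
  exact ⟨l, hexposed.isExtreme.extremePoints_subset_extremePoints hl, hl.1.2⟩

lemma eventually_add_smul_mem_polarBody {s : Set V} (hs : s.Finite) {l g : StrongDual ℝ V}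
    (hl : l ∈ polarBody s) (hg : ∀ x ∈ supportFace s l, g x = 0) :
    ∀ᶠ t : ℝ in nhds 0, l + t • g ∈ polarBody s := by
  refine (Filter.eventually_all_finite hs).2 fun x hx => ?_
  rcases (hl x hx).eq_or_lt with htight | hslack
  · refine Filter.Eventually.of_forall fun t => ?_
    simp [hg x ⟨hx, htight⟩, htight]
  · have hcont : Continuous fun t : ℝ => (l + t • g) x := by fun_prop
    exact (hcont.continuousAt.eventually_lt_const (by simpa using hslack)).mono fun t ht => ht.le

lemma eq_zero_of_forall_supportFace {s : Set V} (hs : s.Finite) {l g : StrongDual ℝ V}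
    (hl : l ∈ (polarBody s).extremePoints ℝ) (hg : ∀ x ∈ supportFace s l, g x = 0) : g = 0 := by
  have hpos := eventually_add_smul_mem_polarBody hs hl.1 hg
  have hneg := eventually_add_smul_mem_polarBody (g := -g) hs hl.1 fun x hx =>
    neg_eq_zero.2 (hg x hx)
  obtain ⟨t, ⟨ht_pos, ht_neg⟩, ht⟩ : ∃ t : ℝ,
      (l + t • g ∈ polarBody s ∧ l + t • -g ∈ polarBody s) ∧ t ≠ 0 :=
    (((hpos.and hneg).filter_mono nhdsWithin_le_nhds).and self_mem_nhdsWithin).exists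
      (f := nhdsWithin 0 {0}ᶜ)
  have hmem : l ∈ openSegment ℝ (l + t • g) (l + t • -g) :=
    ⟨1 / 2, 1 / 2, by norm_num, by norm_num, by norm_num, by module⟩
  have heq : l + t • g = l := hl.2 ht_pos ht_neg hmem
  exact (smul_eq_zero.1 (add_eq_left.1 heq)).resolve_left ht

lemma span_supportFace_eq_top [FiniteDimensional ℝ V] {s : Set V} (hs : s.Finite)
    {l : StrongDual ℝ V} (hl : l ∈ (polarBody s).extremePoints ℝ) :
    Submodule.span ℝ (supportFace s l) = ⊤ := by
  by_contra hne
  obtain ⟨g, hg_ne, hg⟩ := Submodule.exists_le_ker_of_lt_top _ (lt_top_iff_ne_top.2 hne)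
  have hg_zero : LinearMap.toContinuousLinearMap g = 0 :=
    eq_zero_of_forall_supportFace hs hl fun x hx => hg (Submodule.subset_span hx)
  exact hg_ne ((LinearEquiv.map_eq_zero_iff _).1 hg_zero)

end PolarBody

lemma finrank_vectorSpan_add_one_of_span_eq_top {k V : Type*} [Field k] [AddCommGroup V]
    [Module k V] [FiniteDimensional k V] {F : Set V} (hF : F.Nonempty)
    (hspan : Submodule.span k F = ⊤) {l : Module.Dual k V} (hl : ∀ x ∈ F, l x = 1) :
    Module.finrank k (vectorSpan k F) + 1 = Module.finrank k V := by
  obtain ⟨p, hp⟩ := hF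
  refine le_antisymm ?_ ?_
  · have hl_ne : l ≠ 0 := fun h => one_ne_zero ((hl p hp).symm.trans (by rw [h]; rfl))
    have hle : vectorSpan k F ≤ LinearMap.ker l := by
      rw [vectorSpan_def, Submodule.span_le]
      rintro _ ⟨x, hx, y, hy, rfl⟩
      simp only [vsub_eq_sub, SetLike.mem_coe, LinearMap.mem_ker, map_sub, hl x hx, hl y hy,
        sub_self]
    rw [← Module.Dual.finrank_ker_add_one_of_ne_zero hl_ne]
    exact Nat.add_le_add_right (Submodule.finrank_mono hle) 1
  · have htop : vectorSpan k (insert 0 F) = ⊤ := by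
      simp only [vectorSpan_eq_span_vsub_set_right k (Set.mem_insert 0 F), vsub_eq_sub, sub_zero,
        Set.image_id', Submodule.span_insert_zero, hspan]
    rw [← finrank_top k V, ← htop]
    exact finrank_vectorSpan_insert_le_set k F 0

section PyramidDecomposition

variable {V : Type*} [NormedAddCommGroup V] [NormedSpace ℝ V]

lemma gauge_inv_smul_mem_frontier {K : Set V} (hK : IsCompact K) (hconv : Convex ℝ K)
    (h0 : K ∈ nhds 0) {x : V} (hx : x ≠ 0) : 0 < gauge K x ∧ (gauge K x)⁻¹ • x ∈ frontier K := by
  have hpos : 0 < gauge K x :=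
    (gauge_pos (absorbent_nhds_zero h0)
      ((NormedSpace.isVonNBounded_iff ℝ).2 hK.isBounded)).2 hx
  refine ⟨hpos, (gauge_eq_one_iff_mem_frontier hconv h0).1 ?_⟩
  rw [gauge_smul_of_nonneg (inv_nonneg.2 hpos.le), smul_eq_mul, inv_mul_cancel₀ hpos.ne']

lemma pyramid_frontier [Nontrivial V] {K : Set V} (hK : IsCompact K) (hconv : Convex ℝ K)
    (h0 : K ∈ nhds 0) : pyramid (frontier K) = K := by
  refine Set.Subset.antisymm ?_ fun x hx => ?_
  · rintro _ ⟨t, ht, p, hp, rfl⟩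
    exact hconv.smul_mem_of_zero_mem (mem_of_mem_nhds h0) (hK.isClosed.frontier_subset hp) ht
  · rcases eq_or_ne x 0 with rfl | hx0
    · obtain ⟨y, hy⟩ := exists_ne (0 : V)
      exact ⟨0, by simp, _, (gauge_inv_smul_mem_frontier hK hconv h0 hy).2, zero_smul ℝ _⟩
    · obtain ⟨hpos, hfrontier⟩ := gauge_inv_smul_mem_frontier hK hconv h0 hx0
      exact ⟨gauge K x, ⟨hpos.le, gauge_le_one_of_mem hx⟩, _, hfrontier, smul_inv_smul₀ hpos.ne' x⟩

lemma apply_eq_of_mem_pyramid_supportFace {K : Set V} {l l' : StrongDual ℝ V}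
    (hl : l ∈ polarBody K) (hl' : l' ∈ polarBody K) {x : V} (hx : x ∈ pyramid (supportFace K l))
    (hx' : x ∈ pyramid (supportFace K l')) : l x = l' x := by
  have hle {f g : StrongDual ℝ V} (hg : g ∈ polarBody K) (hxf : x ∈ pyramid (supportFace K f)) :
      g x ≤ f x := by
    obtain ⟨t, ht, p, ⟨hpK, hp⟩, rfl⟩ := hxf
    simp only [map_smul, smul_eq_mul, hp]
    exact mul_le_mul_of_nonneg_left (hg p hpK) ht.1
  exact (hle hl hx').antisymm (hle hl' hx)

lemma aedisjoint_pyramid_of_isExposed [FiniteDimensional ℝ V] [MeasurableSpace V] [BorelSpace V]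
    (μ : Measure V) [μ.IsAddHaarMeasure] {K F F' : Set V} (h0 : 0 ∈ interior K)
    (hF : IsExposed ℝ K F) (hF_ne : F.Nonempty) (hF_proper : F ≠ K)
    (hF' : IsExposed ℝ K F') (hF'_ne : F'.Nonempty) (hF'_proper : F' ≠ K) (hFF' : F ≠ F') :
    AEDisjoint μ (pyramid F) (pyramid F') := by
  obtain ⟨l, hl, rfl⟩ := exists_eq_supportFace_of_isExposed h0 hF hF_ne hF_proper
  obtain ⟨l', hl', rfl⟩ := exists_eq_supportFace_of_isExposed h0 hF' hF'_ne hF'_proper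
  have hker : LinearMap.ker (l - l').toLinearMap ≠ ⊤ := fun h => by
    refine hFF' (congrArg _ (sub_eq_zero.1 ?_))
    exact ContinuousLinearMap.coe_injective (LinearMap.ker_eq_top.1 h)
  refine measure_mono_null (fun x hx => ?_) (Measure.addHaar_submodule μ _ hker)
  exact sub_eq_zero.2 (apply_eq_of_mem_pyramid_supportFace hl hl' hx.1 hx.2)

lemma finite_setOf_isExposed_convexHull {s : Set V} (hs : s.Finite) :
    {F | IsExposed ℝ (convexHull ℝ s) F}.Finite := by
  have hcompact := hs.isCompact_convexHull ℝ
  refine Set.Finite.of_finite_image (f := Set.extremePoints ℝ)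
    (hs.finite_subsets.subset ?_) fun F hF F' hF' hext => ?_
  · rintro _ ⟨F, hF, rfl⟩
    exact hF.isExtreme.extremePoints_subset_extremePoints.trans extremePoints_convexHull_subset
  · rw [← closure_convexHull_extremePoints (hF.isCompact hcompact)
      (hF.convex (convex_convexHull ℝ s)), hext, closure_convexHull_extremePoints
      (hF'.isCompact hcompact) (hF'.convex (convex_convexHull ℝ s))]

variable {n : ℕ} {s : Set (Fin n → ℝ)}

lemma isFacet_supportFace (hs : s.Finite) (h0 : 0 ∈ convexHull ℝ s)
    {l : StrongDual ℝ (Fin n → ℝ)} (hl : l ∈ (polarBody s).extremePoints ℝ)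
    (hne : (supportFace (convexHull ℝ s) l).Nonempty) :
    IsFacet (convexHull ℝ s) (supportFace (convexHull ℝ s) l) := by
  have hl_polar : l ∈ polarBody (convexHull ℝ s) := polarBody_convexHull s ▸ hl.1
  refine ⟨isExposed_supportFace hl_polar, fun h => ?_, hne, ?_⟩
  · have h0_mem : 0 ∈ supportFace (convexHull ℝ s) l := h.ge h0
    exact zero_ne_one ((map_zero l).symm.trans h0_mem.2)
  · have hspan : Submodule.span ℝ (supportFace (convexHull ℝ s) l) = ⊤ :=
      top_unique ((span_supportFace_eq_top hs hl).ge.trans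
        (Submodule.span_mono fun x hx => ⟨subset_convexHull ℝ s hx.1, hx.2⟩))
    have hfinrank := finrank_vectorSpan_add_one_of_span_eq_top hne hspan (l := l.toLinearMap)
      fun x hx => hx.2
    rw [Module.finrank_fin_fun] at hfinrank
    rw [direction_affineSpan]
    exact Nat.eq_sub_of_add_eq hfinrank

lemma exists_isFacet_mem (hs : s.Finite) (h0 : 0 ∈ interior (convexHull ℝ s))
    {p : Fin n → ℝ} (hp : p ∈ frontier (convexHull ℝ s)) :
    ∃ F, IsFacet (convexHull ℝ s) F ∧ p ∈ F := by
  have hpK : p ∈ convexHull ℝ s := (hs.isClosed_convexHull ℝ).frontier_subset hp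
  obtain ⟨l, hl, hlp⟩ := exists_mem_extremePoints_polarBody_apply_eq_one
    (convex_convexHull ℝ s) h0 hpK hp.2
  rw [polarBody_convexHull] at hl
  have hpF : p ∈ supportFace (convexHull ℝ s) l := ⟨hpK, hlp⟩
  exact ⟨_, isFacet_supportFace hs (interior_subset h0) hl ⟨p, hpF⟩, hpF⟩

lemma convexHull_eq_iUnion_pyramid [NeZero n] (hs : s.Finite)
    (h0 : 0 ∈ interior (convexHull ℝ s)) :
    convexHull ℝ s = ⋃ F : {F // IsFacet (convexHull ℝ s) F}, pyramid F.1 := by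
  have hpyramid := pyramid_frontier (hs.isCompact_convexHull ℝ) (convex_convexHull ℝ s)
    (mem_interior_iff_mem_nhds.1 h0)
  refine Set.Subset.antisymm ?_ (Set.iUnion_subset fun F => ?_)
  · conv_lhs => rw [← hpyramid]
    rintro _ ⟨t, ht, p, hp, rfl⟩
    obtain ⟨F, hF, hpF⟩ := exists_isFacet_mem hs h0 hp
    exact Set.mem_iUnion.2 ⟨⟨F, hF⟩, t, ht, p, hpF, rfl⟩
  · rintro _ ⟨t, ht, p, hp, rfl⟩
    exact (convex_convexHull ℝ s).smul_mem_of_zero_mem (interior_subset h0) (F.2.1.subset hp) ht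

end PyramidDecomposition

lemma setIntegral_iUnion_le_mul_measureReal {X ι : Type*} [MeasurableSpace X] {μ : Measure X}
    [Countable ι] {A : ι → Set X} (hA : ∀ i, NullMeasurableSet (A i) μ)
    (hdisj : Pairwise (Function.onFun (AEDisjoint μ) A)) (hfin : μ (⋃ i, A i) ≠ ⊤) {f : X → ℝ}
    (hf : IntegrableOn f (⋃ i, A i) μ) {c : ℝ}
    (hc : ∀ i, ∫ x in A i, f x ∂μ ≤ c * μ.real (A i)) :
    ∫ x in ⋃ i, A i, f x ∂μ ≤ c * μ.real (⋃ i, A i) := by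
  have hconst := hasSum_integral_iUnion_ae hA hdisj (integrableOn_const (C := c) hfin)
  simp only [setIntegral_const, smul_eq_mul, mul_comm _ c] at hconst
  exact hasSum_le hc (hasSum_integral_iUnion_ae hA hdisj hf) hconst

open scoped Pointwise in
lemma zero_mem_interior_of_eq_neg {V : Type*} [AddCommGroup V] [Module ℝ V] [TopologicalSpace V]
    [IsTopologicalAddGroup V] [ContinuousConstSMul ℝ V] {K : Set V} (hK : Convex ℝ K)
    (hint : (interior K).Nonempty) (hsymm : K = -K) : 0 ∈ interior K := by
  obtain ⟨p, hp⟩ := hint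
  have hp_neg : -p ∈ interior K := by
    have hpre := (Homeomorph.neg V).preimage_interior K
    rw [show Homeomorph.neg V ⁻¹' K = K from hsymm.symm] at hpre
    rw [← hpre]
    simpa using hp
  have hmid := hK.interior.midpoint_mem hp hp_neg
  rwa [midpoint_self_neg] at hmid

theorem setAverage_convexHull_norm_sq_le {n : ℕ} [NeZero n] {E : Type*}
    [NormedAddCommGroup E] [InnerProductSpace ℝ E] (T : (Fin n → ℝ) →ₗ[ℝ] E)
    {s : Set (Fin n → ℝ)} (hs : s.Finite) (h0 : 0 ∈ interior (convexHull ℝ s)) {M : ℝ}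
    (hM : ∀ F, IsFacet (convexHull ℝ s) F → ∃ y : Fin n → Fin n → ℝ,
      F = convexHull ℝ (Set.range y) ∧
        ∀ ε : Fin n → Bool, ‖∑ i, (if ε i then (1 : ℝ) else -1) • T (y i)‖ ^ 2 ≤ M) :
    ⨍ x in convexHull ℝ s, ‖T x‖ ^ 2 ≤ 2 / ((n + 1) * (n + 2)) * M := by
  have hcompact : IsCompact (convexHull ℝ s) := hs.isCompact_convexHull ℝ
  have hunion := convexHull_eq_iUnion_pyramid hs h0
  have hfinite : Finite {F // IsFacet (convexHull ℝ s) F} :=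
    ((finite_setOf_isExposed_convexHull hs).subset fun F hF => hF.1).to_subtype
  have hpos : 0 < volume.real (convexHull ℝ s) :=
    ENNReal.toReal_pos (Measure.measure_pos_of_nonempty_interior volume ⟨0, h0⟩).ne'
      hcompact.measure_lt_top.ne
  have hint : IntegrableOn (fun x => ‖T x‖ ^ 2) (convexHull ℝ s) :=
    (by fun_prop : Continuous fun x => ‖T x‖ ^ 2).continuousOn.integrableOn_compact hcompact
  have hpyramid (F : {F // IsFacet (convexHull ℝ s) F}) :
      ∫ x in pyramid F.1, ‖T x‖ ^ 2 ≤ 2 / ((n + 1) * (n + 2)) * M * volume.real (pyramid F.1) := by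
    obtain ⟨y, hF, hy⟩ := hM F.1 F.2
    simpa only [hF, Fintype.card_fin] using setIntegral_pyramid_norm_sq_le T y hy
  have hbound : ∫ x in convexHull ℝ s, ‖T x‖ ^ 2 ≤
      2 / ((n + 1) * (n + 2)) * M * volume.real (convexHull ℝ s) := by
    rw [hunion] at hint ⊢
    refine setIntegral_iUnion_le_mul_measureReal (fun F => ?_) (fun F F' hFF' => ?_) ?_ hint
      hpyramid
    · exact (isCompact_pyramid (F.2.1.isCompact hcompact)).measurableSet.nullMeasurableSet
    · exact aedisjoint_pyramid_of_isExposed volume h0 F.2.1 F.2.2.2.1 F.2.2.1 F'.2.1 F'.2.2.2.1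
        F'.2.2.1 (Subtype.coe_ne_coe.2 hFF')
    · exact hunion ▸ hcompact.measure_ne_top
  rwa [setAverage_eq, smul_eq_mul, inv_mul_le_iff₀ hpos, mul_comm]

theorem mean_sq_l2_norm_symmetric_polytope_general {n : ℕ} [NeZero n] {s : Set (Fin n → ℝ)}
    (hs : s.Finite) (h0 : 0 ∈ interior (convexHull ℝ s)) {κ : Type*} [Fintype κ] [Nonempty κ]
    (Y : κ → Fin n → Fin n → ℝ)
    (hfacets : ∀ F, IsFacet (convexHull ℝ s) F → ∃ k, F = convexHull ℝ (Set.range (Y k))) :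
    (volume (convexHull ℝ s)).toReal⁻¹ * ∫ x in convexHull ℝ s, ∑ j, (x j) ^ 2 ≤
      2 / ((n + 1) * (n + 2)) *
        Finset.univ.sup' Finset.univ_nonempty (fun kε : κ × (Fin n → Bool) =>
          ∑ j, (∑ i, (if kε.2 i then (1 : ℝ) else -1) * Y kε.1 i j) ^ 2) := by
  let T : (Fin n → ℝ) →ₗ[ℝ] EuclideanSpace ℝ (Fin n) := (WithLp.linearEquiv 2 ℝ (Fin n → ℝ)).symm
  have hnorm (x : Fin n → ℝ) : ‖T x‖ ^ 2 = ∑ j, x j ^ 2 := EuclideanSpace.real_norm_sq_eq _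
  suffices hmean : ⨍ x in convexHull ℝ s, ‖T x‖ ^ 2 ≤ _ by
    simpa only [setAverage_eq, smul_eq_mul, measureReal_def, hnorm] using hmean
  refine setAverage_convexHull_norm_sq_le T hs h0 fun F hF => ?_
  obtain ⟨k, rfl⟩ := hfacets F hF
  refine ⟨Y k, rfl, fun ε => ?_⟩
  simp only [← map_smul, ← map_sum, hnorm, Finset.sum_apply, Pi.smul_apply, smul_eq_mul]
  exact Finset.le_sup' (fun kε : κ × (Fin n → Bool) =>
    ∑ j, (∑ i, (if kε.2 i then (1 : ℝ) else -1) * Y kε.1 i j) ^ 2) (Finset.mem_univ (k, ε))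

/-- For a symmetric polytope `P ⊂ ℝⁿ` whose facets are simplices
`conv{y₁,…,yₙ}` (enumerated by `Y`),
`(1/|P|)·∫_P ‖x‖₂² dx ≤ (2/((n+1)(n+2)))·max_{facets, signs} ‖ε₁y₁+⋯+εₙyₙ‖₂²`. -/
theorem mean_sq_l2_norm_symmetric_polytope (n : ℕ) (hn : 1 ≤ n)
    (P : Set (Fin n → ℝ)) (N : ℕ) (v : Fin N → (Fin n → ℝ))
    (hP : P = convexHull ℝ (Set.range v)) (hint : (interior P).Nonempty)
    (hsymm : P = -P)
    (m : ℕ) (hm : 0 < m) (Y : Fin m → Fin n → (Fin n → ℝ))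
    (hY : ∀ k, IsFacet P (convexHull ℝ (Set.range (Y k))))
    (hfacets : ∀ F, IsFacet P F → ∃ k, F = convexHull ℝ (Set.range (Y k))) :
    (volume P).toReal⁻¹ * ∫ x in P, ∑ j, (x j) ^ 2 ≤
      ((2 : ℝ) / ((n + 1) * (n + 2))) *
        Finset.univ.sup'
          ⟨(⟨0, hm⟩, fun _ => true), Finset.mem_univ _⟩
          (fun kε : Fin m × (Fin n → Bool) =>
            ∑ j, (∑ i, (if kε.2 i then (1 : ℝ) else -1) * Y kε.1 i j) ^ 2) := by
  subst hP
  have : NeZero n := ⟨Nat.one_le_iff_ne_zero.1 hn⟩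
  have : Nonempty (Fin m) := ⟨⟨0, hm⟩⟩
  have h0 := zero_mem_interior_of_eq_neg (convex_convexHull ℝ _) hint hsymm
  exact mean_sq_l2_norm_symmetric_polytope_general (Set.finite_range v) h0 Y hfacets
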